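/- arXiv:2604.13967 — 6 statements merged into one kernel-verified Lean document; each statement's English description precedes it below -/
import Mathlib

section
/- Let q = 2^m where m is a positive even integer, and let f : F_{q^2} → F_{q^2} be defined by f(x) = x^2 + x·(x^q)^{-1} + x^2·(x^q)^{-1} (with the convention 0^{-1} = 0), i.e., f(x) = x^{2} + x^{1-q} + x^{2-q} for x ≠ 0 and f(0) = 0. Then the number of x ∈ F_{q^2} with f(x) = 0 is exactly 3. -/
/-!
The map `σ x = x ^ q` is an involutive automorphism, and a nonzero zero `x` satisfies
`x * σ x + x + 1 = 0`. The norm `x * σ x` is fixed by `σ`; therefore so is `x`, and the equation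
becomes `x ^ 2 + x + 1 = 0`, i.e. `x` is a primitive cube root of unity. As `q ≡ 1 (mod 3)`, the
field contains both primitive cube roots of unity and `σ` fixes them.
-/

section Involution

variable {R K : Type*} [CommRing R] [Field K]

theorem mul_map_add_add_one_eq_zero_iff {σ : R →+* R} (hσ : Function.Involutive σ) {x : R} :
    x * σ x + x + 1 = 0 ↔ σ x = x ∧ x ^ 2 + x + 1 = 0 := by
  constructor
  · intro h
    have hmap : σ x * x + σ x + 1 = 0 := by simpa [hσ x] using congrArg σ h
    have hfix : σ x = x := by linear_combination hmap - h
    exact ⟨hfix, by linear_combination h - x * hfix⟩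
  · rintro ⟨hfix, h⟩
    linear_combination h + x * hfix

theorem trinomial_eq_zero_iff {σ : K →+* K} (hσ : Function.Involutive σ) {x : K} (hx : x ≠ 0) :
    x ^ 2 + x * (σ x)⁻¹ + x ^ 2 * (σ x)⁻¹ = 0 ↔ σ x = x ∧ x ^ 2 + x + 1 = 0 := by
  have hσx : σ x ≠ 0 := (map_ne_zero σ).mpr hx
  have hfactor : x ^ 2 + x * (σ x)⁻¹ + x ^ 2 * (σ x)⁻¹ = x * (σ x)⁻¹ * (x * σ x + x + 1) := by
    field_simp
    ring
  rw [hfactor, mul_eq_zero, or_iff_right (mul_ne_zero hx (inv_ne_zero hσx)),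
    mul_map_add_add_one_eq_zero_iff hσ]

end Involution

theorem isPrimitiveRoot_three_iff {R : Type*} [CommRing R] [IsDomain R] [NeZero (3 : R)] {x : R} :
    IsPrimitiveRoot x 3 ↔ x ^ 2 + x + 1 = 0 := by
  have : NeZero ((3 : ℕ) : R) := by simpa using ‹NeZero (3 : R)›
  simp [← Polynomial.isRoot_cyclotomic_iff, Polynomial.cyclotomic_three]

theorem setOf_trinomial_eq_zero {K : Type*} [Field K] [NeZero (3 : K)] {σ : K →+* K}
    (hσ : Function.Involutive σ) :
    {x : K | x ^ 2 + x * (σ x)⁻¹ + x ^ 2 * (σ x)⁻¹ = 0} =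
      insert 0 {x : K | σ x = x ∧ IsPrimitiveRoot x 3} := by
  ext x
  rcases eq_or_ne x 0 with rfl | hx
  · simp
  · simp [trinomial_eq_zero_iff hσ hx, isPrimitiveRoot_three_iff, hx]

section FiniteField

variable {K : Type*} [Field K] [Fintype K]

theorem exists_involutive_ringHom_eq_pow {q : ℕ} (hK : Fintype.card K = q ^ 2) :
    ∃ σ : K →+* K, Function.Involutive σ ∧ ∀ x, σ x = x ^ q := by
  obtain ⟨p, _, n, hp, hcard⟩ := FiniteField.card' K
  have : Fact p.Prime := ⟨hp⟩
  obtain ⟨k, -, rfl⟩ := (Nat.dvd_prime_pow hp).mp (hcard ▸ hK ▸ dvd_pow_self q two_ne_zero)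
  refine ⟨iterateFrobenius K p k, fun x => ?_, iterateFrobenius_def p k⟩
  rw [iterateFrobenius_def, iterateFrobenius_def, ← pow_mul, ← sq, ← hK, FiniteField.pow_card]

theorem exists_isPrimitiveRoot_of_dvd_card_sub_one {n : ℕ} (hn : n ∣ Fintype.card K - 1) :
    ∃ ζ : K, IsPrimitiveRoot ζ n := by
  obtain ⟨g, hg⟩ := IsCyclic.exists_ofOrder_eq_natCard (α := Kˣ)
  have hcard : orderOf g = Fintype.card K - 1 := by
    rw [hg, Nat.card_units, Nat.card_eq_fintype_card]
  have hg_primitive : IsPrimitiveRoot (g : K) (orderOf g) :=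
    IsPrimitiveRoot.coe_units_iff.mpr (IsPrimitiveRoot.orderOf g)
  obtain ⟨d, hd⟩ := hn
  exact ⟨_, hg_primitive.pow (orderOf_pos g) (by rw [hcard, hd, mul_comm])⟩

end FiniteField

theorem stmt_0_general {q : ℕ} (hq : q ≡ 1 [MOD 3]) {K : Type*} [Field K] [Fintype K]
    (hK : Fintype.card K = q ^ 2) :
    {x : K | x ^ 2 + x * (x ^ q)⁻¹ + x ^ 2 * (x ^ q)⁻¹ = 0}.ncard = 3 := by
  obtain ⟨σ, hσ, hσq⟩ := exists_involutive_ringHom_eq_pow hK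
  have hdvd : 3 ∣ Fintype.card K - 1 :=
    (Nat.modEq_iff_dvd' Fintype.card_pos).mp (by simpa [hK] using (hq.pow 2).symm)
  obtain ⟨ζ, hζ⟩ := exists_isPrimitiveRoot_of_dvd_card_sub_one hdvd
  have : NeZero (3 : K) := by simpa using hζ.neZero'
  have hfix {x : K} (hx : IsPrimitiveRoot x 3) : σ x = x := by
    rw [hσq, pow_eq_pow_of_modEq hq hx.pow_eq_one, pow_one]
  have hroots : {x : K | σ x = x ∧ IsPrimitiveRoot x 3} = primitiveRoots 3 K := by
    ext x
    simpa [mem_primitiveRoots] using hfix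
  have hzero : (0 : K) ∉ (primitiveRoots 3 K : Set K) := by
    simpa using fun h : IsPrimitiveRoot (0 : K) 3 => h.ne_zero three_ne_zero rfl
  calc {x : K | x ^ 2 + x * (x ^ q)⁻¹ + x ^ 2 * (x ^ q)⁻¹ = 0}.ncard
      = (insert 0 (primitiveRoots 3 K : Set K)).ncard := by
        simp_rw [← hσq, setOf_trinomial_eq_zero hσ, hroots]
    _ = (primitiveRoots 3 K).card + 1 := by
        rw [Set.ncard_insert_of_notMem hzero, Set.ncard_coe_finset]
    _ = 3 := by rw [hζ.card_primitiveRoots, Nat.totient_prime Nat.prime_three]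

theorem two_pow_modEq_one_of_even {m : ℕ} (hm : Even m) : 2 ^ m ≡ 1 [MOD 3] := by
  obtain ⟨k, rfl⟩ := hm.exists_two_nsmul
  simpa [pow_mul] using (show 4 ≡ 1 [MOD 3] from rfl).pow k

/-- For q = 2^m with m a positive even integer, the trinomial
f(x) = x^2 + x^{1-q} + x^2-q} over F_{q^2} has exactly 3 zeros. -/
theorem stmt_0 (m : ℕ) (hm : 0 < m) (hme : Even m) (q : ℕ) (hq : q = 2 ^ m)
    (K : Type*) [Field K] [Fintype K] [CharP K 2] (hK : Fintype.card K = q ^ 2) :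
    {x : K | x ^ 2 + x * (x ^ q)⁻¹ + x ^ 2 * (x ^ q)⁻¹ = 0}.ncard = 3 :=
  stmt_0_general (hq ▸ two_pow_modEq_one_of_even hme) hK
end

section
/- Let q = 2^m where m is a positive even integer, and let f : F_{q^2} → F_{q^2} be defined by f(x) = x^2 + x·(x^q)^{-1} + x^2·(x^q)^{-1} (with the convention 0^{-1} = 0). Then the set of x ∈ F_{q^2} with f(x) = 0 is exactly {0, ω, ω^2}, where ω is a primitive element of the subfield F_4 of F_{q^2} (i.e., ω satisfies ω^2 + ω + 1 = 0). -/
/-!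
The power map `x ↦ x ^ q` is an involutive automorphism `σ` of `K`, and this is all that matters
about it. For `x ≠ 0`, clearing denominators turns the equation into `x * σ x + 1 + x = 0`. Applying
`σ` gives `σ x * x + 1 + σ x = 0`, and subtracting yields `σ x = x`, hence `x ^ 2 + x + 1 = 0`.
The roots of this quadratic are `ω` and `ω ^ 2`; they are cube roots of unity, so they are fixed by
`σ` because `2 ^ m ≡ 1 [MOD 3]` for even `m`.
-/

lemma pow_three_eq_one_of_sq_add_self_add_one_eq_zero {R : Type*} [CommRing R] {x : R}
    (hx : x ^ 2 + x + 1 = 0) : x ^ 3 = 1 := by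
  linear_combination (x - 1) * hx

lemma sq_add_self_add_one_eq_zero_iff {R : Type*} [CommRing R] [NoZeroDivisors R] {x ω : R}
    (hω : ω ^ 2 + ω + 1 = 0) : x ^ 2 + x + 1 = 0 ↔ x = ω ∨ x = ω ^ 2 := by
  have factorization : x ^ 2 + x + 1 = (x - ω) * (x - ω ^ 2) := by
    linear_combination (x + 1 - ω) * hω
  rw [factorization, mul_eq_zero, sub_eq_zero, sub_eq_zero]

lemma pow_two_pow_eq_self_of_pow_three_eq_one {M : Type*} [Monoid M] {x : M} (hx : x ^ 3 = 1)
    {m : ℕ} (hm : Even m) : x ^ 2 ^ m = x := by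
  obtain ⟨k, rfl⟩ := hm
  have two_pow_modEq_one : 2 ^ (k + k) ≡ 1 [MOD 3] := by
    rw [← two_mul, pow_mul]
    simpa only [one_pow] using Nat.ModEq.pow k (show 2 ^ 2 ≡ 1 [MOD 3] from rfl)
  rw [pow_eq_pow_mod _ hx, two_pow_modEq_one, Nat.one_mod, pow_one]

lemma iterateFrobenius_involutive_of_card_eq_sq {K : Type*} [Field K] [Fintype K] {p n : ℕ}
    [ExpChar K p] (hK : Fintype.card K = (p ^ n) ^ 2) :
    Function.Involutive (iterateFrobenius K p n) := fun x => by
  rw [iterateFrobenius_def, iterateFrobenius_def, ← pow_mul, ← sq, ← hK, FiniteField.pow_card]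

lemma mul_map_add_one_add_self_eq_zero_iff {R : Type*} [CommRing R] {σ : R →+* R}
    (hσ : Function.Involutive σ) {x : R} :
    x * σ x + 1 + x = 0 ↔ σ x = x ∧ x ^ 2 + x + 1 = 0 := by
  constructor
  · intro h
    have conjugate : σ x * x + 1 + σ x = 0 := by
      simpa only [map_add, map_mul, map_one, map_zero, hσ x] using congrArg σ h
    have fixed : σ x = x := by linear_combination conjugate - h
    rw [fixed] at h
    exact ⟨fixed, by linear_combination h⟩
  · rintro ⟨fixed, h⟩
    rw [fixed]
    linear_combination h

lemma sq_add_mul_inv_add_sq_mul_inv_eq_zero_iff {K : Type*} [Field K] {x y : K}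
    (hx : x ≠ 0) (hy : y ≠ 0) :
    x ^ 2 + x * y⁻¹ + x ^ 2 * y⁻¹ = 0 ↔ x * y + 1 + x = 0 := by
  have factorization : x ^ 2 + x * y⁻¹ + x ^ 2 * y⁻¹ = x * y⁻¹ * (x * y + 1 + x) := by
    field_simp
  rw [factorization, mul_eq_zero_iff_left (mul_ne_zero hx (inv_ne_zero hy))]

theorem stmt_1_general {K : Type*} [Field K] {σ : K →+* K} (hσ : Function.Involutive σ) {ω : K}
    (hω : ω ^ 2 + ω + 1 = 0) (hσω : σ ω = ω) :
    {x : K | x ^ 2 + x * (σ x)⁻¹ + x ^ 2 * (σ x)⁻¹ = 0} = {0, ω, ω ^ 2} := by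
  ext x
  simp only [Set.mem_ofPred_eq, Set.mem_insert_iff, Set.mem_singleton_iff]
  rcases eq_or_ne x 0 with rfl | hx
  · simp
  have roots_fixed : x = ω ∨ x = ω ^ 2 → σ x = x := by
    rintro (rfl | rfl)
    · exact hσω
    · rw [map_pow, hσω]
  rw [sq_add_mul_inv_add_sq_mul_inv_eq_zero_iff hx ((map_ne_zero σ).mpr hx),
    mul_map_add_one_add_self_eq_zero_iff hσ, sq_add_self_add_one_eq_zero_iff hω,
    and_iff_right_of_imp roots_fixed, or_iff_right hx]

/-- The zero set of f(x) = x^2 + x^{1-q} + x^{2-q} over F_{q^2}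
is exactly {0, ω, ω^2}, where ω is a primitive element of F_4 (ω^2 + ω + 1 = 0). -/
theorem stmt_1 (m : ℕ) (hm : 0 < m) (hme : Even m) (q : ℕ) (hq : q = 2 ^ m)
    (K : Type*) [Field K] [Fintype K] [CharP K 2] (hK : Fintype.card K = q ^ 2)
    (ω : K) (hω : ω ^ 2 + ω + 1 = 0) :
    {x : K | x ^ 2 + x * (x ^ q)⁻¹ + x ^ 2 * (x ^ q)⁻¹ = 0} = {0, ω, ω ^ 2} := by
  subst hq
  exact stmt_1_general (σ := iterateFrobenius K 2 m)
    (iterateFrobenius_involutive_of_card_eq_sq hK) hω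
    (pow_two_pow_eq_self_of_pow_three_eq_one
      (pow_three_eq_one_of_sq_add_self_add_one_eq_zero hω) hme)
end

section
/- Let q = 2^m where m is a positive even integer, and let f : F_{q^2} → F_{q^2} be defined by f(x) = x^2 + x·(x^q)^{-1} + x^2·(x^q)^{-1} (with the convention 0^{-1} = 0). Then the number of x ∈ F_{q^2} with f(x) = 1 is exactly q + 1. -/
/-!
Substitute `u = x + 1`. In characteristic `2`, clearing the denominator `x ^ q` turns `f x = 1` into
`u * (u ^ (q + 1) - 1) = 0`, subject to `u ≠ 1` because `x = 0` is not a solution. The solutions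
therefore correspond to the `(q + 1)`-st roots of unity with `1` exchanged for `0`. The unit group
of a field of order `q ^ 2` is cyclic of order `(q - 1) * (q + 1)`, so it contains `q + 1` of these.
-/

lemma ncard_setOf_pow_eq_one {M : Type*} [CommMonoid M] {n : ℕ} (hn : n ≠ 0) :
    {u : M | u ^ n = 1}.ncard = Nat.card (rootsOfUnity n M) := by
  have image_val : {u : M | u ^ n = 1} = Units.val '' (rootsOfUnity n M : Set Mˣ) := by
    ext u
    constructor
    · intro hu
      exact ⟨Units.ofPowEqOne u n hu hn, Units.pow_ofPowEqOne hu hn, rfl⟩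
    · rintro ⟨v, hv, rfl⟩
      exact (mem_rootsOfUnity' n v).1 hv
  rw [image_val, Set.ncard_image_of_injective _ Units.val_injective]
  exact (Nat.card_coe_set_eq _).symm

section FiniteField

variable {K : Type*} [Field K] [Finite K]

lemma natCard_rootsOfUnity_eq_gcd (n : ℕ) :
    Nat.card (rootsOfUnity n K) = (Nat.card K - 1).gcd n := by
  rw [rootsOfUnity_eq_ker, IsCyclic.card_powMonoidHom_ker, Nat.card_units]

lemma natCard_rootsOfUnity_of_card_eq_sq {q : ℕ} (hK : Nat.card K = q ^ 2) :
    Nat.card (rootsOfUnity (q + 1) K) = q + 1 := by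
  have hdvd : q + 1 ∣ q ^ 2 - 1 := ⟨q - 1, by rw [← Nat.sq_sub_sq, one_pow]⟩
  rw [natCard_rootsOfUnity_eq_gcd, hK, Nat.gcd_eq_right hdvd]

end FiniteField

section CharTwo

variable {K : Type*} [Field K] [CharP K 2]

lemma sq_add_mul_inv_add_sq_mul_inv_eq_one_iff (x : K) {y : K} (hy : y ≠ 0) :
    x ^ 2 + x * y⁻¹ + x ^ 2 * y⁻¹ = 1 ↔ (x + 1) * ((x + 1) * (y + 1) - 1) = 0 := by
  have two_eq_zero : (2 : K) = 0 := CharTwo.two_eq_zero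
  have clear_denominator :
      (x ^ 2 + x * y⁻¹ + x ^ 2 * y⁻¹ - 1) * y = (x + 1) * ((x + 1) * (y + 1) - 1) := by
    field_simp
    linear_combination -(x * y + y) * two_eq_zero
  rw [← clear_denominator, mul_eq_zero, or_iff_left hy, sub_eq_zero]

lemma sq_add_mul_inv_pow_add_sq_mul_inv_pow_eq_one_iff (m : ℕ) (x : K) :
    x ^ 2 + x * (x ^ 2 ^ m)⁻¹ + x ^ 2 * (x ^ 2 ^ m)⁻¹ = 1 ↔
      x + 1 ∈ insert 0 ({u : K | u ^ (2 ^ m + 1) = 1} \ {1}) := by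
  rcases eq_or_ne x 0 with rfl | hx
  · simp
  have pow_succ_eq : (x + 1) ^ (2 ^ m + 1) = (x + 1) * (x ^ 2 ^ m + 1) := by
    rw [pow_succ', add_pow_char_pow, one_pow]
  rw [sq_add_mul_inv_add_sq_mul_inv_eq_one_iff x (pow_ne_zero _ hx), ← pow_succ_eq]
  simp [sub_eq_zero, hx]

end CharTwo

theorem stmt_2_general (m : ℕ) (K : Type*) [Field K] [CharP K 2] :
    {x : K | x ^ 2 + x * (x ^ 2 ^ m)⁻¹ + x ^ 2 * (x ^ 2 ^ m)⁻¹ = 1}.ncard =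
      Nat.card (rootsOfUnity (2 ^ m + 1) K) := by
  let roots : Set K := {u | u ^ (2 ^ m + 1) = 1}
  have solutions_eq :
      {x : K | x ^ 2 + x * (x ^ 2 ^ m)⁻¹ + x ^ 2 * (x ^ 2 ^ m)⁻¹ = 1} =
        (· + 1) '' insert 0 (roots \ {1}) := by
    ext x
    rw [Set.image_add_right, CharTwo.neg_eq]
    exact sq_add_mul_inv_pow_add_sq_mul_inv_pow_eq_one_iff m x
  have zero_notMem : (0 : K) ∉ roots := by simp [roots]
  have one_mem : (1 : K) ∈ roots := one_pow _
  rw [solutions_eq, Set.ncard_image_of_injective _ (add_left_injective 1),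
    Set.ncard_exchange zero_notMem one_mem, ncard_setOf_pow_eq_one (Nat.succ_ne_zero _)]

/-- For q = 2^m with m a positive even integer, the equation
f(x) = 1 with f(x) = x^2 + x^{1-q} + x^{2-q} has exactly q + 1 solutions in F_{q^2}. -/
theorem stmt_2 (m : ℕ) (hm : 0 < m) (hme : Even m) (q : ℕ) (hq : q = 2 ^ m)
    (K : Type*) [Field K] [Fintype K] [CharP K 2] (hK : Fintype.card K = q ^ 2) :
    {x : K | x ^ 2 + x * (x ^ q)⁻¹ + x ^ 2 * (x ^ q)⁻¹ = 1}.ncard = q + 1 := by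
  subst hq
  rw [stmt_2_general, natCard_rootsOfUnity_of_card_eq_sq (Nat.card_eq_fintype_card.trans hK)]
end

section
/- Let q = 2^m where m is a positive even integer, and let f : F_{q^2} → F_{q^2} be defined by f(x) = x^2 + x·(x^q)^{-1} + x^2·(x^q)^{-1} (with the convention 0^{-1} = 0). Then for every c ∈ F_{q^2} with c ≠ 0 and c ≠ 1, the number of x ∈ F_{q^2} with f(x) = c is at most 2. -/
/-!
Let `σ x = x ^ q`, an involutive automorphism, write `x̄ = σ x`, and let `x` be a solution; it is
nonzero because `c ≠ 0`. Clearing denominators gives `x̄ (x² + c) = x² + x`. Eliminating `x̄`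
between this and its conjugate leaves the affine quartic
`(c̄ + 1) x⁴ + (c + 1) x + c + c̄ c² = 0`, so the difference `a` of two solutions satisfies
`(c̄ + 1) a³ = c + 1`, and its norm `a ā` is a cube root of unity.

Hence three solutions have the form `x, x + b, x + ω b` with `ω` a primitive cube root of unity.
As `m` is even, `ω̄ = ω`, so the differences `b, ω b, ω² b` have norms `n, ω² n, ω n`, and after
rotating the triangle we may assume `n = ω²`. Then the three equations force `b̄ (x² + c) = 0`,
whereas `x² + c = 0` would give `x = 1` and `c = 1`.
-/

theorem exists_isPrimitiveRoot_of_pow_eq_pow {K : Type*} [Field K] {p : ℕ} (hp : p.Prime)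
    {a b : K} (h : a ^ p = b ^ p) (hab : a ≠ b) (hb : b ≠ 0) :
    ∃ ω, IsPrimitiveRoot ω p ∧ a = ω * b := by
  have : Fact p.Prime := ⟨hp⟩
  refine ⟨a / b, ?_, (div_mul_cancel₀ a hb).symm⟩
  refine IsPrimitiveRoot.iff_orderOf.2 (orderOf_eq_prime ?_ ?_)
  · rw [div_pow, h, div_self (pow_ne_zero p hb)]
  · rwa [ne_eq, div_eq_one_iff_eq hb]

theorem sq_add_self_add_one_eq_zero_of_isPrimitiveRoot {R : Type*} [CommRing R] [IsDomain R]
    {ω : R} (hω : IsPrimitiveRoot ω 3) : ω ^ 2 + ω + 1 = 0 := by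
  have hsum := hω.geom_sum_eq_zero (by norm_num)
  simp only [Finset.sum_range_succ, Finset.sum_range_zero] at hsum
  linear_combination hsum

theorem rotate_triangle_mem {R : Type*} [CommRing R] [IsDomain R] [CharP R 2] {s : Set R}
    {x b ω : R} (hω : IsPrimitiveRoot ω 3) (hx : x ∈ s) (hxb : x + b ∈ s) :
    x + ω * b + ω * b ∈ s ∧ x + ω * b + ω * (ω * b) ∈ s := by
  have hroot := sq_add_self_add_one_eq_zero_of_isPrimitiveRoot hω
  have hthird : x + ω * b + ω * (ω * b) = x + b := by
    linear_combination b * hroot - b * CharTwo.two_eq_zero (R := R)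
  rw [CharTwo.add_cancel_right, hthird]
  exact ⟨hx, hxb⟩

theorem iterateFrobenius_eq_self_of_dvd {R : Type*} [CommSemiring R] {p : ℕ} [ExpChar R p]
    {d m : ℕ} (hdm : d ∣ m) {x : R} (hx : x ^ p ^ d = x) : iterateFrobenius R p m x = x := by
  obtain ⟨k, rfl⟩ := hdm
  rw [iterateFrobenius_mul_apply]
  exact Function.IsFixedPt.iterate hx k

theorem iterateFrobenius_involutive {K : Type*} [Field K] [Fintype K] {p : ℕ} [ExpChar K p]
    {m : ℕ} (hK : Fintype.card K = (p ^ m) ^ 2) :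
    Function.Involutive (iterateFrobenius K p m) := fun x ↦ by
  rw [iterateFrobenius_def, iterateFrobenius_def, ← pow_mul, ← sq, ← hK, FiniteField.pow_card]

theorem iterateFrobenius_two_eq_self_of_isPrimitiveRoot {K : Type*} [Field K] [CharP K 2] {m : ℕ}
    (hm : Even m) {ω : K} (hω : IsPrimitiveRoot ω 3) : iterateFrobenius K 2 m ω = ω :=
  iterateFrobenius_eq_self_of_dvd hm.two_dvd <| by
    linear_combination ω * hω.pow_eq_one

theorem exists_three_of_two_lt_encard {α : Type*} {s : Set α} (h : 2 < s.encard) :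
    ∃ x ∈ s, ∃ y ∈ s, ∃ z ∈ s, x ≠ y ∧ x ≠ z ∧ y ≠ z := by
  obtain ⟨t, hts, ht⟩ := Set.exists_subset_encard_eq (Order.add_one_le_of_lt h)
  obtain ⟨x, y, z, hxy, hxz, hyz, rfl⟩ := Set.encard_eq_three.1 (ht.trans (by norm_num))
  exact ⟨x, hts (by simp), y, hts (by simp), z, hts (by simp), hxy, hxz, hyz⟩

/-- The fibre over `c` of `x ↦ x² + x / σ x + x² / σ x`. The map `x ↦ x² + x^(1-q) + x^(2-q)` is the
case `σ x = x ^ q`. -/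
def twistedFiber {K : Type*} [Field K] (σ : K →+* K) (c : K) : Set K :=
  {x | x ^ 2 + x * (σ x)⁻¹ + x ^ 2 * (σ x)⁻¹ = c}

namespace twistedFiber

variable {K : Type*} [Field K] {σ : K →+* K} {c x y b ω : K}

theorem ne_zero (hc0 : c ≠ 0) (hx : x ∈ twistedFiber σ c) : x ≠ 0 := by
  rintro rfl
  exact hc0 (by simpa [twistedFiber] using hx.symm)

variable [CharP K 2]

theorem map_mul_sq_add (hx : x ∈ twistedFiber σ c) : σ x * (x ^ 2 + c) = x ^ 2 + x := by
  rcases eq_or_ne x 0 with rfl | hx0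
  · simp
  have hσx : σ x ≠ 0 := (map_ne_zero σ).2 hx0
  have hmul : x ^ 2 * σ x + x + x ^ 2 = c * σ x := by
    rw [← show _ = c from hx]
    field_simp
  linear_combination hmul + (c * σ x - x - x ^ 2) * CharTwo.two_eq_zero (R := K)

theorem sq_add_ne_zero (hc0 : c ≠ 0) (hc1 : c ≠ 1) (hx : x ∈ twistedFiber σ c) :
    x ^ 2 + c ≠ 0 := by
  intro hsq
  have hmul : x * (x + 1) = 0 := by
    linear_combination σ x * hsq - map_mul_sq_add hx
  have hx1 : x = 1 :=
    CharTwo.add_eq_zero.1 ((mul_eq_zero.1 hmul).resolve_left (ne_zero hc0 hx))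
  rw [hx1, one_pow, CharTwo.add_eq_zero] at hsq
  exact hc1 hsq.symm

theorem quartic_eq_zero (hσ : Function.Involutive σ) (hc0 : c ≠ 0)
    (hx : x ∈ twistedFiber σ c) :
    (σ c + 1) * x ^ 4 + (c + 1) * x + (c + σ c * c ^ 2) = 0 := by
  have heq := map_mul_sq_add hx
  have hconj : x * (σ x ^ 2 + σ c) = σ x ^ 2 + σ x := by
    simpa only [map_mul, map_add, map_pow, hσ x] using congrArg σ heq
  have helim : x * ((x ^ 2 + x) ^ 2 + σ c * (x ^ 2 + c) ^ 2) =
      (x ^ 2 + x) ^ 2 + (x ^ 2 + x) * (x ^ 2 + c) := by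
    linear_combination (x ^ 2 + c) ^ 2 * hconj + (x ^ 2 + c) * heq +
      (1 - x) * (σ x * (x ^ 2 + c) + x ^ 2 + x) * heq
  apply mul_left_cancel₀ (ne_zero hc0 hx)
  linear_combination helim +
    ((1 - c * σ c) * x ^ 3 + (c + 1) * x ^ 2 + c * x) * CharTwo.two_eq_zero (R := K)

theorem map_mul_pow_three (hσ : Function.Involutive σ) (hc0 : c ≠ 0) (hb : b ≠ 0)
    (hx : x ∈ twistedFiber σ c) (hxb : x + b ∈ twistedFiber σ c) :
    σ (c + 1) * b ^ 3 = c + 1 := by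
  have hpow : (x + b) ^ 4 = x ^ 4 + b ^ 4 := add_pow_char_pow (n := 2) (p := 2) x b
  apply mul_right_cancel₀ hb
  rw [map_add, map_one]
  linear_combination quartic_eq_zero hσ hc0 hxb - quartic_eq_zero hσ hc0 hx -
    (σ c + 1) * hpow - (c + 1) * b * CharTwo.two_eq_zero (R := K)

theorem norm_pow_three (hσ : Function.Involutive σ) (hc0 : c ≠ 0) (hc1 : c ≠ 1) (hb : b ≠ 0)
    (hx : x ∈ twistedFiber σ c) (hxb : x + b ∈ twistedFiber σ c) : (b * σ b) ^ 3 = 1 := by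
  have hcube := map_mul_pow_three hσ hc0 hb hx hxb
  have hconj : (c + 1) * σ b ^ 3 = σ (c + 1) := by
    simpa only [map_mul, map_pow, hσ (c + 1)] using congrArg σ hcube
  have hc : c + 1 ≠ 0 := by rwa [ne_eq, CharTwo.add_eq_zero]
  apply mul_left_cancel₀ hc
  linear_combination b ^ 3 * hconj + hcube

theorem map_mul_sq_add_of_add_mem (hx : x ∈ twistedFiber σ c) (hxb : x + b ∈ twistedFiber σ c) :
    σ b * (x ^ 2 + c) + b ^ 2 * (σ x + 1) + b * (b * σ b + 1) = 0 := by
  have heq := map_mul_sq_add hxb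
  rw [map_add] at heq
  linear_combination heq - map_mul_sq_add hx +
    (b ^ 2 + b + x * b - (σ x + σ b) * x * b) * CharTwo.two_eq_zero (R := K)

theorem norm_ne_sq (hc0 : c ≠ 0) (hc1 : c ≠ 1) (hω : IsPrimitiveRoot ω 3) (hσω : σ ω = ω)
    (hb : b ≠ 0) (hx : x ∈ twistedFiber σ c) (hxb : x + b ∈ twistedFiber σ c)
    (hxωb : x + ω * b ∈ twistedFiber σ c) : b * σ b ≠ ω ^ 2 := by
  intro hnorm
  have hroot := sq_add_self_add_one_eq_zero_of_isPrimitiveRoot hω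
  have heq := map_mul_sq_add_of_add_mem hx hxb
  have hωeq := map_mul_sq_add_of_add_mem hx hxωb
  rw [map_mul, hσω] at hωeq
  have hprod : σ b * (x ^ 2 + c) = 0 := by
    -- In `ω² * heq + hωeq` the terms with `σ x` cancel, and `σ b * (x ^ 2 + c)` has
    -- coefficient `ω² + ω = 1`.
    linear_combination -ω ^ 2 * heq - hωeq + b * (ω ^ 2 + ω ^ 3) * hnorm +
      (σ b * (x ^ 2 + c) + b * (ω ^ 3 - ω + 2)) * hroot +
      (ω ^ 2 * b ^ 2 * (σ x + 1) - b) * CharTwo.two_eq_zero (R := K)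
  exact mul_ne_zero ((map_ne_zero σ).2 hb) (sq_add_ne_zero hc0 hc1 hx) hprod

theorem add_mul_notMem (hc0 : c ≠ 0) (hc1 : c ≠ 1) (hω : IsPrimitiveRoot ω 3) (hσω : σ ω = ω)
    (hb : b ≠ 0) (hnorm : (b * σ b) ^ 3 = 1) (hx : x ∈ twistedFiber σ c)
    (hxb : x + b ∈ twistedFiber σ c) : x + ω * b ∉ twistedFiber σ c := by
  intro hxωb
  obtain ⟨hrot₁, hrot₂⟩ := rotate_triangle_mem hω hx hxb
  obtain ⟨hrot₁', hrot₂'⟩ := rotate_triangle_mem hω hxωb hrot₁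
  have hωb : ω * b ≠ 0 := mul_ne_zero (hω.ne_zero three_ne_zero) hb
  have hωωb : ω * (ω * b) ≠ 0 := mul_ne_zero (hω.ne_zero three_ne_zero) hωb
  obtain ⟨i, hi, hi_norm⟩ := hω.eq_pow_of_pow_eq_one hnorm
  interval_cases i
  · refine norm_ne_sq hc0 hc1 hω hσω hωb hxωb hrot₁ hrot₂ ?_
    rw [map_mul, hσω]
    linear_combination -ω ^ 2 * hi_norm
  · refine norm_ne_sq hc0 hc1 hω hσω hωωb hrot₂ hrot₁' hrot₂' ?_
    rw [map_mul, map_mul, hσω]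
    linear_combination -ω ^ 4 * hi_norm + ω ^ 2 * hω.pow_eq_one
  · exact norm_ne_sq hc0 hc1 hω hσω hb hx hxb hxωb hi_norm.symm

end twistedFiber

theorem stmt_4_general {K : Type*} [Field K] [CharP K 2] {σ : K →+* K}
    (hσ : Function.Involutive σ) (hσω : ∀ ω, IsPrimitiveRoot ω 3 → σ ω = ω)
    {c : K} (hc0 : c ≠ 0) (hc1 : c ≠ 1) : (twistedFiber σ c).encard ≤ 2 := by
  by_contra! hcard
  obtain ⟨x, hx, y, hy, z, hz, hxy, hxz, hyz⟩ := exists_three_of_two_lt_encard hcard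
  obtain ⟨a, rfl⟩ : ∃ a, y = x + a := ⟨y - x, (add_sub_cancel x y).symm⟩
  obtain ⟨b, rfl⟩ : ∃ b, z = x + b := ⟨z - x, (add_sub_cancel x z).symm⟩
  have ha : a ≠ 0 := by rintro rfl; exact hxy (add_zero x).symm
  have hb : b ≠ 0 := by rintro rfl; exact hxz (add_zero x).symm
  have hab : a ≠ b := by rintro rfl; exact hyz rfl
  have hc : σ (c + 1) ≠ 0 := by rwa [map_ne_zero, ne_eq, CharTwo.add_eq_zero]
  have hcubes : a ^ 3 = b ^ 3 := mul_left_cancel₀ hc <|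
    (twistedFiber.map_mul_pow_three hσ hc0 ha hx hy).trans
      (twistedFiber.map_mul_pow_three hσ hc0 hb hx hz).symm
  obtain ⟨ω, hω, rfl⟩ := exists_isPrimitiveRoot_of_pow_eq_pow Nat.prime_three hcubes hab hb
  have hnorm := twistedFiber.norm_pow_three hσ hc0 hc1 hb hx hz
  exact twistedFiber.add_mul_notMem hc0 hc1 hω (hσω ω hω) hb hnorm hx hz hy

/-- For every c ∈ F_{q^2} \ F_2, the equation f(x) = c with
f(x) = x^2 + x^{1-q} + x^{2-q} has at most 2 solutions in F_{q^2}. -/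
theorem stmt_4 (m : ℕ) (hm : 0 < m) (hme : Even m) (q : ℕ) (hq : q = 2 ^ m)
    (K : Type*) [Field K] [Fintype K] [CharP K 2] (hK : Fintype.card K = q ^ 2)
    (c : K) (hc0 : c ≠ 0) (hc1 : c ≠ 1) :
    {x : K | x ^ 2 + x * (x ^ q)⁻¹ + x ^ 2 * (x ^ q)⁻¹ = c}.ncard ≤ 2 := by
  subst hq
  exact (Set.encard_le_coe_iff_finite_ncard_le.1 <| stmt_4_general (iterateFrobenius_involutive hK)
    (fun _ ↦ iterateFrobenius_two_eq_self_of_isPrimitiveRoot hme) hc0 hc1).2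
end

section
/- Let q = 2^m for a positive integer m, and let U_{q+1} = {x ∈ F_{q^2} : x^{q+1} = 1}. If u_1, u_2, u_3, u_4 are four pairwise distinct elements of U_{q+1}, then u_1 + u_2 + u_3 + u_4 ≠ 0. -/
/-!
If `u ^ (q + 1) = 1`, then `u ^ q` is the inverse of `u`. Applying the Frobenius `x ↦ x ^ q` to
`u₁ + u₂ + u₃ + u₄ = 0` thus shows that the inverses sum to zero too, so the third elementary
symmetric function of the `uᵢ` vanishes along with the first. Eliminating `u₄` turns the third one
into `-(u₁ + u₂) * (u₁ + u₃) * (u₂ + u₃)`, so two of the `uᵢ` are opposite, which in characteristic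
two means equal.
-/

section CommRing

variable {R : Type*} [CommRing R] {u₁ u₂ u₃ u₄ : R}

theorem sum_triple_products_eq_zero_of_sum_inverses_eq_zero {v₁ v₂ v₃ v₄ : R}
    (h₁ : u₁ * v₁ = 1) (h₂ : u₂ * v₂ = 1) (h₃ : u₃ * v₃ = 1) (h₄ : u₄ * v₄ = 1)
    (hv : v₁ + v₂ + v₃ + v₄ = 0) :
    u₂ * u₃ * u₄ + u₁ * u₃ * u₄ + u₁ * u₂ * u₄ + u₁ * u₂ * u₃ = 0 := by
  linear_combination u₁ * u₂ * u₃ * u₄ * hv - u₂ * u₃ * u₄ * h₁ - u₁ * u₃ * u₄ * h₂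
    - u₁ * u₂ * u₄ * h₃ - u₁ * u₂ * u₃ * h₄

theorem sum_triple_products_eq_neg_mul_pairwise_sums (hsum : u₁ + u₂ + u₃ + u₄ = 0) :
    u₂ * u₃ * u₄ + u₁ * u₃ * u₄ + u₁ * u₂ * u₄ + u₁ * u₂ * u₃ =
      -((u₁ + u₂) * (u₁ + u₃) * (u₂ + u₃)) := by
  linear_combination (u₂ * u₃ + u₁ * u₃ + u₁ * u₂) * hsum

theorem stmt_5_general [NoZeroDivisors R] (p m : ℕ) [ExpChar R p]
    (h₁ : u₁ ^ (p ^ m + 1) = 1) (h₂ : u₂ ^ (p ^ m + 1) = 1)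
    (h₃ : u₃ ^ (p ^ m + 1) = 1) (h₄ : u₄ ^ (p ^ m + 1) = 1)
    (h₁₂ : u₁ + u₂ ≠ 0) (h₁₃ : u₁ + u₃ ≠ 0) (h₂₃ : u₂ + u₃ ≠ 0) :
    u₁ + u₂ + u₃ + u₄ ≠ 0 := by
  intro hsum
  have hfrob : u₁ ^ p ^ m + u₂ ^ p ^ m + u₃ ^ p ^ m + u₄ ^ p ^ m = 0 := by
    simpa only [map_add, map_zero, iterateFrobenius_def] using
      congrArg (iterateFrobenius R p m) hsum
  rw [pow_succ'] at h₁ h₂ h₃ h₄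
  have hprod : (u₁ + u₂) * (u₁ + u₃) * (u₂ + u₃) = 0 := by
    rw [← neg_eq_zero, ← sum_triple_products_eq_neg_mul_pairwise_sums hsum]
    exact sum_triple_products_eq_zero_of_sum_inverses_eq_zero h₁ h₂ h₃ h₄ hfrob
  exact mul_ne_zero (mul_ne_zero h₁₂ h₁₃) h₂₃ hprod

end CommRing

/-- Four pairwise distinct elements of U_{q+1} ⊆ F_{q^2}^* never sum to zero. -/
theorem stmt_5 (m : ℕ) (hm : 0 < m) (q : ℕ) (hq : q = 2 ^ m)
    (K : Type*) [Field K] [Fintype K] [CharP K 2] (hK : Fintype.card K = q ^ 2)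
    (u₁ u₂ u₃ u₄ : K)
    (h₁ : u₁ ^ (q + 1) = 1) (h₂ : u₂ ^ (q + 1) = 1)
    (h₃ : u₃ ^ (q + 1) = 1) (h₄ : u₄ ^ (q + 1) = 1)
    (h₁₂ : u₁ ≠ u₂) (h₁₃ : u₁ ≠ u₃) (h₁₄ : u₁ ≠ u₄)
    (h₂₃ : u₂ ≠ u₃) (h₂₄ : u₂ ≠ u₄) (h₃₄ : u₃ ≠ u₄) :
    u₁ + u₂ + u₃ + u₄ ≠ 0 := by
  subst hq
  exact stmt_5_general 2 m h₁ h₂ h₃ h₄ (CharTwo.add_eq_zero.not.mpr h₁₂)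
    (CharTwo.add_eq_zero.not.mpr h₁₃) (CharTwo.add_eq_zero.not.mpr h₂₃)
end

section
/- Let q = 2^m for a positive integer m and let d = 3q - 2. Let n_3 denote the number of triples (x_1, x_2, x_3) ∈ (F_{q^2}^*)^3 satisfying x_1 + x_2 + x_3 = 0 and x_1^d + x_2^d + x_3^d = 0. Then n_3 = (q - 2)(q^2 - 1) if m is even, and n_3 = q(q^2 - 1) if m is odd. -/
/-!
The equations are homogeneous, so `n₃ = |Kˣ| N`, where `N` counts the ratios `u = x₂ / x₁`, that
is the units `u ≠ 1` with `1 + u ^ d + (1 + u) ^ d = 0`. Since `z ^ d = (z ^ q) ^ 3 / z ^ 2` and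
`z ↦ z ^ q` is additive, clearing denominators in characteristic two turns this equation into
`(u ^ q + u) ^ 2 * (u ^ q + u ^ 2) = 0`, so that `u ^ (q - 1) = 1` or `u ^ (q - 2) = 1`. The
exponents `q - 1` and `q - 2` are coprime and `Kˣ` is cyclic, whence
`N = gcd (|K| - 1, q - 1) + gcd (|K| - 1, q - 2) - 2`. When `|K| = q ^ 2`, the first gcd is `q - 1`
and the second is `gcd (3, q - 2)`, because `q ^ 2 - 1 = (q - 2) * (q + 2) + 3`.
-/

section HomogeneousCount

lemma ncard_eq_card_units_mul_ncard_fst_eq_one {K V : Type*} [GroupWithZero K] [MulAction K V]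
    {S : Set (K × V)} (fst_ne_zero : ∀ p ∈ S, p.1 ≠ 0)
    (smul_mem : ∀ a : Kˣ, ∀ p ∈ S, a • p ∈ S) :
    S.ncard = Nat.card Kˣ * {v | (1, v) ∈ S}.ncard := by
  set rescale : Kˣ × V → K × V := fun z ↦ (z.1, z.1 • z.2)
  have rescale_eq_smul (a : Kˣ) (v : V) : rescale (a, v) = a • (1, v) := by
    simp [rescale, Units.smul_def]
  have rescale_injective : rescale.Injective := by
    rintro ⟨a, v⟩ ⟨b, w⟩ h
    obtain ⟨hab, hvw⟩ := Prod.mk.inj h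
    obtain rfl : a = b := Units.ext hab
    exact congrArg _ (smul_left_cancel a hvw)
  have image_rescale : rescale '' (Set.univ ×ˢ {v | (1, v) ∈ S}) = S := by
    ext ⟨x, w⟩
    constructor
    · rintro ⟨⟨a, v⟩, ⟨-, hv⟩, h⟩
      rw [← h, rescale_eq_smul]
      exact smul_mem a _ hv
    · intro h
      lift x to Kˣ using (fst_ne_zero _ h).isUnit
      refine ⟨(x, x⁻¹ • w), ⟨trivial, ?_⟩, by simp [rescale]⟩
      simpa [Units.smul_def] using smul_mem x⁻¹ _ h
  rw [← Set.ncard_univ, ← Set.ncard_prod, ← Set.ncard_image_of_injective _ rescale_injective,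
    image_rescale]

lemma ncard_sum_eq_zero_and_sum_pow_eq_zero (K : Type*) [Field K] (d : ℕ) :
    {p : K × K × K | p.1 ≠ 0 ∧ p.2.1 ≠ 0 ∧ p.2.2 ≠ 0 ∧ p.1 + p.2.1 + p.2.2 = 0 ∧
        p.1 ^ d + p.2.1 ^ d + p.2.2 ^ d = 0}.ncard =
      Nat.card Kˣ *
        {u : Kˣ | 1 + (u : K) ≠ 0 ∧ 1 + (u : K) ^ d + (-(1 + u : K)) ^ d = 0}.ncard := by
  rw [ncard_eq_card_units_mul_ncard_fst_eq_one (fun p hp ↦ hp.1)]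
  · have complete_injective : (fun u : Kˣ ↦ ((u : K), -(1 + u : K))).Injective :=
      fun u v h ↦ Units.ext (Prod.mk.inj h).1
    rw [← Set.ncard_image_of_injective _ complete_injective]
    congr 2
    ext ⟨x, y⟩
    constructor
    · rintro ⟨-, hx, hy, hsum, hpow⟩
      obtain rfl : y = -(1 + x) := eq_neg_of_add_eq_zero_right hsum
      exact ⟨Units.mk0 x hx, ⟨neg_ne_zero.mp hy, by simpa using hpow⟩, rfl⟩
    · rintro ⟨u, ⟨hu, hpow⟩, h⟩
      obtain ⟨rfl, rfl⟩ := Prod.mk.inj h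
      exact ⟨one_ne_zero, u.ne_zero, neg_ne_zero.mpr hu, add_neg_cancel _, by simpa using hpow⟩
  · rintro a ⟨x, y, z⟩ ⟨hx, hy, hz, hsum, hpow⟩
    simp_all [Units.smul_def, mul_pow, ← mul_add]

end HomogeneousCount

section CyclicGroup

variable {G : Type*}

lemma pow_eq_pow_iff_pow_sub_eq_one [Group G] (u : G) {k n : ℕ} (h : k ≤ n) :
    u ^ n = u ^ k ↔ u ^ (n - k) = 1 := by
  rw [pow_sub u h, mul_inv_eq_one]

lemma ncard_pow_eq_one [CommGroup G] [IsCyclic G] [Finite G] (a : ℕ) :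
    {u : G | u ^ a = 1}.ncard = (Nat.card G).gcd a :=
  IsCyclic.card_powMonoidHom_ker G a

lemma ncard_ne_one_and_pow_eq_one_or_pow_eq_one [CommGroup G] [IsCyclic G] [Finite G]
    {a b : ℕ} (hab : a.Coprime b) :
    {u : G | u ≠ 1 ∧ (u ^ a = 1 ∨ u ^ b = 1)}.ncard + 2 =
      (Nat.card G).gcd a + (Nat.card G).gcd b := by
  set A := {u : G | u ^ a = 1}
  set B := {u : G | u ^ b = 1}
  have inter_eq : A ∩ B = {1} := by
    ext u
    simp [A, B, ← orderOf_dvd_iff_pow_eq_one, ← Nat.dvd_gcd_iff, hab.gcd_eq_one]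
  have ne_one_eq : {u : G | u ≠ 1 ∧ (u ^ a = 1 ∨ u ^ b = 1)} = (A ∪ B) \ {1} :=
    Set.ext fun _ ↦ and_comm
  have one_mem : (1 : G) ∈ A ∪ B := Or.inl (one_pow a)
  calc
    _ = (A ∪ B).ncard + 1 := by rw [ne_one_eq, ← Set.ncard_sdiff_singleton_add_one one_mem]
    _ = A.ncard + B.ncard := by
      rw [← Set.ncard_union_add_ncard_inter, inter_eq, Set.ncard_singleton]
    _ = _ := by rw [ncard_pow_eq_one, ncard_pow_eq_one]

end CyclicGroup

section CharTwo

lemma sq_mul_one_add_sq_mul_one_add_pow_add_pow {R : Type*} [CommRing R] [CharP R 2]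
    (m : ℕ) (x : R) :
    x ^ 2 * (1 + x) ^ 2 * (1 + x ^ (3 * 2 ^ m - 2) + (1 + x) ^ (3 * 2 ^ m - 2)) =
      (x ^ 2 ^ m + x) ^ 2 * (x ^ 2 ^ m + x ^ 2) := by
  have sq_mul_pow (z : R) : z ^ 2 * z ^ (3 * 2 ^ m - 2) = (z ^ 2 ^ m) ^ 3 := by
    have : 0 < 2 ^ m := Nat.two_pow_pos m
    rw [← pow_add, ← pow_mul]
    congr 1
    omega
  have one_add_pow : (1 + x) ^ 2 ^ m = 1 + x ^ 2 ^ m := by rw [add_pow_char_pow, one_pow]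
  set y := x ^ 2 ^ m
  calc
    _ = x ^ 2 * (1 + x) ^ 2 + (1 + x) ^ 2 * y ^ 3 + x ^ 2 * (1 + y) ^ 3 := by
      rw [← one_add_pow, ← sq_mul_pow, ← sq_mul_pow]
      ring
    _ = (y + x) ^ 2 * (y + x ^ 2) := by
      grind

variable {K : Type*} [Field K] [CharP K 2]

lemma one_add_pow_add_pow_eq_zero_iff (m : ℕ) {x : K} (hx : x ≠ 0) (hx' : 1 + x ≠ 0) :
    1 + x ^ (3 * 2 ^ m - 2) + (1 + x) ^ (3 * 2 ^ m - 2) = 0 ↔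
      x ^ 2 ^ m = x ∨ x ^ 2 ^ m = x ^ 2 := by
  have denominator_ne_zero : x ^ 2 * (1 + x) ^ 2 ≠ 0 :=
    mul_ne_zero (pow_ne_zero 2 hx) (pow_ne_zero 2 hx')
  rw [← mul_eq_zero_iff_left denominator_ne_zero, sq_mul_one_add_sq_mul_one_add_pow_add_pow,
    mul_eq_zero, sq_eq_zero_iff, CharTwo.add_eq_zero, CharTwo.add_eq_zero]

lemma one_add_ne_zero_and_one_add_pow_add_pow_eq_zero_iff {m : ℕ} (hm : m ≠ 0) (u : Kˣ) :
    1 + (u : K) ≠ 0 ∧ 1 + (u : K) ^ (3 * 2 ^ m - 2) + (-(1 + u : K)) ^ (3 * 2 ^ m - 2) = 0 ↔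
      u ≠ 1 ∧ (u ^ (2 ^ m - 1) = 1 ∨ u ^ (2 ^ m - 2) = 1) := by
  have one_add_ne_zero_iff : 1 + (u : K) ≠ 0 ↔ u ≠ 1 := by
    rw [Ne, CharTwo.add_eq_zero, eq_comm, Units.val_eq_one]
  rw [CharTwo.neg_eq, ← pow_eq_pow_iff_pow_sub_eq_one u Nat.one_le_two_pow,
    ← pow_eq_pow_iff_pow_sub_eq_one u (Nat.le_self_pow hm 2), ← one_add_ne_zero_iff]
  refine and_congr_right fun hu ↦ ?_
  rw [one_add_pow_add_pow_eq_zero_iff m u.ne_zero hu]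
  simp only [Units.ext_iff, Units.val_pow_eq_pow_val, pow_one]

end CharTwo

section Gcd

lemma coprime_sub_one_sub_two {q : ℕ} (hq : 2 ≤ q) : (q - 1).Coprime (q - 2) := by
  obtain ⟨r, rfl⟩ := Nat.exists_eq_add_of_le' hq
  simp

lemma gcd_sq_sub_one_sub_one (q : ℕ) : (q ^ 2 - 1).gcd (q - 1) = q - 1 :=
  Nat.gcd_eq_right (by simpa using Nat.sub_dvd_pow_sub_pow q 1 2)

lemma gcd_sq_sub_one_sub_two {q : ℕ} (hq : 2 ≤ q) :
    (q ^ 2 - 1).gcd (q - 2) = Nat.gcd 3 (q - 2) := by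
  obtain ⟨r, rfl⟩ := Nat.exists_eq_add_of_le' hq
  have sq_sub_one_eq : (r + 2) ^ 2 - 1 = 3 + r * (r + 4) := by
    rw [show (r + 2) ^ 2 = 3 + r * (r + 4) + 1 by ring, Nat.add_sub_cancel]
  rw [sq_sub_one_eq, Nat.add_sub_cancel, Nat.gcd_add_mul_left_left]

lemma three_dvd_two_pow_sub_two_iff {m : ℕ} (hm : m ≠ 0) : 3 ∣ 2 ^ m - 2 ↔ Odd m := by
  have two_eq_neg_one : (2 : ZMod 3) = -1 := rfl
  have neg_one_ne_one : (-1 : ZMod 3) ≠ 1 := by decide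
  rw [← CharP.cast_eq_zero_iff (ZMod 3), Nat.cast_sub (Nat.le_self_pow hm 2), sub_eq_zero,
    Nat.cast_pow, Nat.cast_ofNat, two_eq_neg_one, neg_one_pow_eq_neg_one_iff_odd neg_one_ne_one]

lemma gcd_three_two_pow_sub_two {m : ℕ} (hm : m ≠ 0) :
    Nat.gcd 3 (2 ^ m - 2) = if Even m then 1 else 3 := by
  split_ifs with h
  · rwa [← Nat.coprime_iff_gcd_eq_one, Nat.prime_three.coprime_iff_not_dvd,
      three_dvd_two_pow_sub_two_iff hm, Nat.not_odd_iff_even]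
  · rwa [Nat.gcd_eq_left_iff_dvd, three_dvd_two_pow_sub_two_iff hm, ← Nat.not_even_iff_odd]

end Gcd

theorem stmt_6_general (m : ℕ) (hm : 0 < m) (q : ℕ) (hq : q = 2 ^ m)
    (K : Type*) [Field K] [Fintype K] [CharP K 2] :
    ({p : K × K × K | p.1 ≠ 0 ∧ p.2.1 ≠ 0 ∧ p.2.2 ≠ 0 ∧
        p.1 + p.2.1 + p.2.2 = 0 ∧
        p.1 ^ (3 * q - 2) + p.2.1 ^ (3 * q - 2) + p.2.2 ^ (3 * q - 2) = 0}.ncard : ℤ) =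
      ((Fintype.card K : ℤ) - 1) *
        ((Fintype.card K - 1).gcd (q - 1) + (Fintype.card K - 1).gcd (q - 2) - 2) := by
  subst hq
  have card_units : Nat.card Kˣ = Fintype.card K - 1 := by
    rw [Nat.card_units, Nat.card_eq_fintype_card]
  have ncard_ratios := ncard_ne_one_and_pow_eq_one_or_pow_eq_one (G := Kˣ)
    (coprime_sub_one_sub_two (Nat.le_self_pow hm.ne' 2))
  simp only [ncard_sum_eq_zero_and_sum_pow_eq_zero,
    one_add_ne_zero_and_one_add_pow_add_pow_eq_zero_iff hm.ne']
  rw [card_units] at ncard_ratios ⊢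
  rw [Nat.cast_mul, Nat.cast_pred Fintype.card_pos, ← Nat.cast_add, ← ncard_ratios, Nat.cast_add,
    Nat.cast_ofNat, add_sub_cancel_right]

/-- Counting triples in (F_{q^2}^*)^3 with x₁+x₂+x₃ = 0 and
x₁^d + x₂^d + x₃^d = 0, where d = 3q - 2. -/
theorem stmt_6 (m : ℕ) (hm : 0 < m) (q : ℕ) (hq : q = 2 ^ m)
    (K : Type*) [Field K] [Fintype K] [CharP K 2] (hK : Fintype.card K = q ^ 2) :
    ({p : K × K × K | p.1 ≠ 0 ∧ p.2.1 ≠ 0 ∧ p.2.2 ≠ 0 ∧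
        p.1 + p.2.1 + p.2.2 = 0 ∧
        p.1 ^ (3 * q - 2) + p.2.1 ^ (3 * q - 2) + p.2.2 ^ (3 * q - 2) = 0}.ncard : ℤ) =
      if Even m then ((q : ℤ) - 2) * ((q : ℤ) ^ 2 - 1)
      else (q : ℤ) * ((q : ℤ) ^ 2 - 1) := by
  have two_le : 2 ≤ q := hq ▸ Nat.le_self_pow hm.ne' 2
  rw [stmt_6_general m hm q hq K, hK, gcd_sq_sub_one_sub_one, gcd_sq_sub_one_sub_two two_le, hq,
    gcd_three_two_pow_sub_two hm.ne', ← hq]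
  split_ifs <;> push_cast [show 1 ≤ q by omega] <;> ring
end
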